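/- Under assumptions (1), (2), (3) on the quadratic integrals of the geodesic flow, for almost every x ∈ U (with respect to Lebesgue measure on ℝⁿ) the matrices K_1(x), K_2(x), …, K_n(x) are linearly independent in the real vector space of n×n matrices. -/

import Mathlib

open MeasureTheory Matrix

/-- The canonical Poisson bracket on the phase space `(Fin n → ℝ) × (Fin n → ℝ)`
with coordinates `(x, p)`:
`{f, h}(x,p) = ∑ i, (∂f/∂x_i · ∂h/∂p_i − ∂f/∂p_i · ∂h/∂x_i)`. -/
noncomputable def poisson {n : ℕ} (f h : (Fin n → ℝ) × (Fin n → ℝ) → ℝ)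
    (z : (Fin n → ℝ) × (Fin n → ℝ)) : ℝ :=
  ∑ i : Fin n,
    (fderiv ℝ f z (Pi.single i 1, 0) * fderiv ℝ h z (0, Pi.single i 1)
      - fderiv ℝ f z (0, Pi.single i 1) * fderiv ℝ h z (Pi.single i 1, 0))

/-
Lowering the indices of a quadratic integral by the metric gives a Killing tensor `h`, and the
Killing equation bounds the symmetrisation of `∇h` by `h` itself. Differentiating twice expresses
all third derivatives of `h` linearly in its 2-jet, so on a connected set a Killing tensor is
determined by its 2-jet at one point.

Suppose that on a set `S` a Killing tensor `M` is a combination `∑ c_a K_a` of pointwise independent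
Killing tensors. At almost every point of `S` all derivatives of the difference vanish, and the
Killing equation reduces to `∑ dc_a(G p) K_a(p, p) = 0`. In coordinates diagonalising all the `K_a`
this cubic identity forces `dc_a = 0`, hence also `d²c_a = 0`, almost everywhere on `S`. If `S` is
not null, then `M` and a combination of the `K_a` with constant coefficients have the same 2-jet at
some point and so agree on `U`, against the functional independence of the integrals.
-/

section Jets

open scoped Topology Pointwise

variable {E F : Type*} [NormedAddCommGroup E] [NormedSpace ℝ E]
  [NormedAddCommGroup F] [NormedSpace ℝ F] {F' G : Type*} [NormedAddCommGroup F']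
  [NormedSpace ℝ F'] [NormedAddCommGroup G] [NormedSpace ℝ G]

theorem ae_mem_imp_uniqueDiffWithinAt [FiniteDimensional ℝ E] [MeasurableSpace E] [BorelSpace E]
    (μ : Measure E) [μ.IsAddHaarMeasure] (s : Set E) :
    ∀ᵐ x ∂μ, x ∈ s → UniqueDiffWithinAt ℝ s x := by
  refine ae_imp_of_ae_restrict ?_
  filter_upwards [Besicovitch.ae_tendsto_measure_inter_div μ s] with x density_one
  have mem_cone (z : E) : z ∈ tangentConeAt ℝ s x := by
    have near (k : ℕ) : ∃ (r : ℝ) (a : E), r ∈ Set.Ioo 0 (1 / (k + 1 : ℝ)) ∧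
        x + r • a ∈ s ∧ dist a z ≤ 1 / (k + 1 : ℝ) := by
      have hk : (0 : ℝ) < 1 / (k + 1) := Nat.one_div_pos_of_nat
      obtain ⟨r, ⟨y, hy, hyr⟩, hr⟩ :=
        ((Measure.eventually_nonempty_inter_smul_of_density_one μ s x density_one _
          measurableSet_closedBall (Metric.measure_closedBall_pos μ z hk).ne').and
            (Ioo_mem_nhdsGT hk)).exists
      rw [Set.singleton_add] at hyr
      obtain ⟨_, ⟨a, ha, rfl⟩, rfl⟩ := hyr
      exact ⟨r, a, hr, hy, ha⟩
    choose r a hr has haz using near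
    have tendsto_r : Filter.Tendsto r Filter.atTop (𝓝 0) :=
      squeeze_zero (fun k => (hr k).1.le) (fun k => (hr k).2.le)
        tendsto_one_div_add_atTop_nhds_zero_nat
    have tendsto_a : Filter.Tendsto a Filter.atTop (𝓝 z) :=
      tendsto_iff_dist_tendsto_zero.2
        (squeeze_zero (fun k => dist_nonneg) haz tendsto_one_div_add_atTop_nhds_zero_nat)
    refine mem_tangentConeAt_of_seq Filter.atTop r⁻¹ (fun k => r k • a k) ?_ (.of_forall has) ?_
    · simpa only [zero_smul] using tendsto_r.smul tendsto_a
    · simpa only [Pi.inv_apply, inv_smul_smul₀ (hr _).1.ne'] using tendsto_a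
  refine ⟨?_, mem_closure_of_nonempty_tangentConeAt ⟨0, mem_cone 0⟩⟩
  rw [Set.eq_univ_of_forall mem_cone, Submodule.span_univ]
  exact dense_univ

theorem ae_fderiv_eq_zero_of_ae_eq_zero [FiniteDimensional ℝ E] [MeasurableSpace E] [BorelSpace E]
    {μ : Measure E} [μ.IsAddHaarMeasure] {s : Set E} {f : E → F}
    (hf : ∀ x ∈ s, DifferentiableAt ℝ f x) (h : ∀ᵐ x ∂μ, x ∈ s → f x = 0) :
    ∀ᵐ x ∂μ, x ∈ s → fderiv ℝ f x = 0 := by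
  filter_upwards [h, ae_mem_imp_uniqueDiffWithinAt μ (s ∩ {y | f y = 0})] with x hfx hux hx
  have vanishes : Set.EqOn f (fun _ => 0) (s ∩ {y | f y = 0}) := fun y hy => hy.2
  rw [← (hf x hx).fderivWithin (hux ⟨hx, hfx hx⟩), fderivWithin_congr vanishes (hfx hx),
    fderivWithin_const_apply]

theorem norm_iteratedFDeriv_bilinear_le (B : F →L[ℝ] F' →L[ℝ] G) {f : E → F} {g : E → F'}
    {x : E} {n : ℕ} (hf : ContDiffAt ℝ n f x) (hg : ContDiffAt ℝ n g x) :
    ‖iteratedFDeriv ℝ n (fun y => B (f y) (g y)) x‖ ≤ ‖B‖ * ∑ i ∈ Finset.range (n + 1),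
      (n.choose i : ℝ) * ‖iteratedFDeriv ℝ i f x‖ * ‖iteratedFDeriv ℝ (n - i) g x‖ := by
  obtain ⟨u, hu, huo, hxu⟩ :=
    mem_nhds_iff.1 ((hf.eventually (by simp)).and (hg.eventually (by simp)))
  have h := B.norm_iteratedFDerivWithin_le_of_bilinear
    (fun y hy => (hu hy).1.contDiffWithinAt) (fun y hy => (hu hy).2.contDiffWithinAt)
    huo.uniqueDiffOn hxu le_rfl
  simpa only [fun i => iteratedFDerivWithin_of_isOpen (𝕜 := ℝ) (f := f) i huo hxu,
    fun i => iteratedFDerivWithin_of_isOpen (𝕜 := ℝ) (f := g) i huo hxu,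
    iteratedFDerivWithin_of_isOpen n huo hxu] using h

/-- The `m`-jet of `f` at `x` vanishes: all derivatives of order at most `m` are zero at `x`. -/
def VanishesToOrder (m : ℕ) (f : E → F) (x : E) : Prop :=
  ∀ j ≤ m, iteratedFDeriv ℝ j f x = 0

theorem ae_vanishesToOrder_of_ae_eq_zero [FiniteDimensional ℝ E] [MeasurableSpace E]
    [BorelSpace E] {μ : Measure E} [μ.IsAddHaarMeasure] {m : ℕ} {s : Set E} {f : E → F}
    (hf : ∀ x ∈ s, ContDiffAt ℝ m f x) (h : ∀ᵐ x ∂μ, x ∈ s → f x = 0) :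
    ∀ᵐ x ∂μ, x ∈ s → VanishesToOrder m f x := by
  have order (j : ℕ) (hj : j ≤ m) : ∀ᵐ x ∂μ, x ∈ s → iteratedFDeriv ℝ j f x = 0 := by
    induction j with
    | zero =>
      filter_upwards [h] with x hx hxs
      rw [← norm_eq_zero, norm_iteratedFDeriv_zero, hx hxs, norm_zero]
    | succ j ih =>
      have hdiff : ∀ x ∈ s, DifferentiableAt ℝ (iteratedFDeriv ℝ j f) x := fun x hx =>
        (hf x hx).differentiableAt_iteratedFDeriv (by exact_mod_cast hj)
      filter_upwards [ae_fderiv_eq_zero_of_ae_eq_zero hdiff (ih (by lia))] with x hx hxs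
      ext v
      rw [iteratedFDeriv_succ_apply_left, hx hxs]
      rfl
  filter_upwards [ae_all_iff.2 fun j => ae_all_iff.2 (order j)] with x hx hxs j hj
  exact hx j hj hxs

theorem vanishesToOrder_succ_iff {m : ℕ} {f : E → F} {x : E} :
    VanishesToOrder (m + 1) f x ↔ f x = 0 ∧ VanishesToOrder m (fderiv ℝ f) x := by
  simp only [VanishesToOrder, ← norm_eq_zero (a := iteratedFDeriv ℝ _ _ _),
    norm_iteratedFDeriv_fderiv, ← norm_eq_zero (a := f x)]
  refine ⟨fun h => ⟨?_, fun j hj => h _ (by lia)⟩, ?_⟩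
  · rw [← norm_iteratedFDeriv_zero (𝕜 := ℝ)]; exact h 0 (by lia)
  · rintro ⟨h0, h⟩ (_ | j) hj
    · rwa [norm_iteratedFDeriv_zero]
    · exact h j (by lia)

namespace VanishesToOrder

variable {m : ℕ} {f g : E → F} {x : E}

theorem eq_zero (h : VanishesToOrder m f x) : f x = 0 := by
  rw [← norm_eq_zero, ← norm_iteratedFDeriv_zero (𝕜 := ℝ), h 0 m.zero_le, norm_zero]

theorem fderiv_eq_zero (h : VanishesToOrder (m + 1) f x) : fderiv ℝ f x = 0 :=
  (vanishesToOrder_succ_iff.1 h).2.eq_zero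

theorem add (hf : VanishesToOrder m f x) (hg : VanishesToOrder m g x)
    (hfc : ContDiffAt ℝ m f x) (hgc : ContDiffAt ℝ m g x) :
    VanishesToOrder m (fun y => f y + g y) x := fun j hj => by
  have hjm : (j : WithTop ℕ∞) ≤ m := by exact_mod_cast hj
  rw [← Pi.add_def, iteratedFDeriv_add_apply (hfc.of_le hjm) (hgc.of_le hjm), hf j hj, hg j hj,
    add_zero]

theorem sum {ι : Type*} {s : Finset ι} {f : ι → E → F}
    (hf : ∀ i ∈ s, VanishesToOrder m (f i) x) (hfc : ∀ i ∈ s, ContDiffAt ℝ m (f i) x) :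
    VanishesToOrder m (fun y => ∑ i ∈ s, f i y) x := fun j hj => by
  have hjm : (j : WithTop ℕ∞) ≤ m := by exact_mod_cast hj
  rw [iteratedFDeriv_fun_sum_apply fun i hi => (hfc i hi).of_le hjm]
  exact Finset.sum_eq_zero fun i hi => hf i hi j hj

theorem bilinear_left {f : E → F} {g : E → F'} (hf : VanishesToOrder m f x)
    (B : F →L[ℝ] F' →L[ℝ] G) (hfc : ContDiffAt ℝ m f x) (hgc : ContDiffAt ℝ m g x) :
    VanishesToOrder m (fun y => B (f y) (g y)) x := fun j hj => by
  have hjm : (j : WithTop ℕ∞) ≤ m := by exact_mod_cast hj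
  refine norm_le_zero_iff.1 ((norm_iteratedFDeriv_bilinear_le B (hfc.of_le hjm)
    (hgc.of_le hjm)).trans_eq ?_)
  refine mul_eq_zero_of_right _ (Finset.sum_eq_zero fun i hi => ?_)
  rw [hf i (by have := Finset.mem_range.1 hi; lia), norm_zero, mul_zero, zero_mul]

theorem bilinear_right {f : E → F} {g : E → F'} (hg : VanishesToOrder m g x)
    (B : F →L[ℝ] F' →L[ℝ] G) (hfc : ContDiffAt ℝ m f x) (hgc : ContDiffAt ℝ m g x) :
    VanishesToOrder m (fun y => B (f y) (g y)) x :=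
  hg.bilinear_left B.flip hgc hfc

end VanishesToOrder

end Jets

section UniqueContinuation

open scoped Topology

variable {E F : Type*} [NormedAddCommGroup E] [NormedSpace ℝ E]
  [NormedAddCommGroup F] [NormedSpace ℝ F] {U : Set E} {x₀ : E}

theorem eqOn_ball_zero_of_norm_fderiv_le {r C : ℝ} {u : E → F}
    (hu : ∀ x ∈ Metric.ball x₀ r, DifferentiableAt ℝ u x)
    (hC : ∀ x ∈ Metric.ball x₀ r, ‖fderiv ℝ u x‖ ≤ C * ‖u x‖) (h₀ : u x₀ = 0) :
    Set.EqOn u 0 (Metric.ball x₀ r) := fun x hx => by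
  have mem_ball {t : ℝ} (ht : t ∈ Set.Icc (0 : ℝ) 1) :
      AffineMap.lineMap x₀ x t ∈ Metric.ball x₀ r :=
    (convex_ball x₀ r).segment_subset (Metric.mem_ball_self (Metric.pos_of_mem_ball hx)) hx
      (segment_eq_image_lineMap ℝ x₀ x ▸ Set.mem_image_of_mem _ ht)
  have hderiv {t : ℝ} (ht : t ∈ Set.Icc (0 : ℝ) 1) :
      HasDerivAt (fun t => u (AffineMap.lineMap x₀ x t))
        (fderiv ℝ u (AffineMap.lineMap x₀ x t) (x - x₀)) t :=
    (hu _ (mem_ball ht)).hasFDerivAt.comp_hasDerivAt t AffineMap.hasDerivAt_lineMap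
  have hzero := eq_zero_of_abs_deriv_le_mul_abs_self_of_eq_zero_right
    (fun t ht => (hderiv ht).continuousAt.continuousWithinAt)
    (fun t ht => (hderiv (Set.Ico_subset_Icc_self ht)).hasDerivWithinAt)
    (by rwa [AffineMap.lineMap_apply_zero]) (K := C * ‖x - x₀‖) (fun t ht => by
      refine ((fderiv ℝ u _).le_opNorm_of_le le_rfl).trans ?_
      rw [mul_right_comm]
      gcongr
      exact hC _ (mem_ball (Set.Ico_subset_Icc_self ht)))
    1 (Set.right_mem_Icc.2 zero_le_one)
  rwa [AffineMap.lineMap_apply_one] at hzero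

theorem eqOn_zero_of_norm_fderiv_le {u : E → F} (hUo : IsOpen U) (hUc : IsPreconnected U)
    (hu : DifferentiableOn ℝ u U)
    (hC : ∀ x ∈ U, ∃ C, ∀ᶠ y in 𝓝 x, ‖fderiv ℝ u y‖ ≤ C * ‖u y‖) (hx₀ : x₀ ∈ U)
    (h₀ : u x₀ = 0) : Set.EqOn u 0 U := by
  have local_zero {x : E} (hx : x ∈ U) (hux : u x = 0) : x ∈ interior {y | u y = 0} := by
    obtain ⟨C, hCx⟩ := hC x hx
    obtain ⟨r, hr, hball⟩ := Metric.eventually_nhds_iff_ball.1 (hCx.and (hUo.mem_nhds hx))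
    exact mem_interior.2 ⟨Metric.ball x r, eqOn_ball_zero_of_norm_fderiv_le
      (fun y hy => hu.differentiableAt (hUo.mem_nhds (hball y hy).2)) (fun y hy => (hball y hy).1)
      hux, Metric.isOpen_ball, Metric.mem_ball_self hr⟩
  have hsub : U ⊆ interior {y | u y = 0} := by
    refine hUc.subset_of_closure_inter_subset isOpen_interior ⟨x₀, hx₀, local_zero hx₀ h₀⟩ ?_
    rintro x ⟨hx, hxU⟩
    refine local_zero hxU ?_
    have hcont := (hu.differentiableAt (hUo.mem_nhds hxU)).continuousAt
    have hmaps : Set.MapsTo u (interior {y | u y = 0}) {0} := fun y hy =>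
      interior_subset (s := {y | u y = 0}) hy
    rw [← Set.mem_singleton_iff, ← closure_singleton]
    exact hcont.continuousWithinAt.mem_closure hx hmaps
  exact hsub.trans interior_subset

theorem eqOn_zero_of_norm_iteratedFDeriv_succ_le {m : ℕ} {f : E → F} (hUo : IsOpen U)
    (hUc : IsPreconnected U) (hf : ContDiffOn ℝ (m + 1) f U)
    (hC : ∀ x ∈ U, ∃ C, ∀ᶠ y in 𝓝 x, ‖iteratedFDeriv ℝ (m + 1) f y‖ ≤
      C * ∑ j ∈ Finset.range (m + 1), ‖iteratedFDeriv ℝ j f y‖)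
    (hx₀ : x₀ ∈ U) (h₀ : VanishesToOrder m f x₀) : Set.EqOn f 0 U := by
  let jet (x : E) (j : Fin (m + 1)) : E [×j]→L[ℝ] F := iteratedFDeriv ℝ j f x
  have hdiff {x : E} (hx : x ∈ U) (j : Fin (m + 1)) : DifferentiableAt ℝ (jet · j) x :=
    (hf.contDiffAt (hUo.mem_nhds hx)).differentiableAt_iteratedFDeriv (by exact_mod_cast j.2)
  have hjet : Set.EqOn jet 0 U := by
    refine eqOn_zero_of_norm_fderiv_le hUo hUc
      (fun x hx => (differentiableAt_pi.2 (hdiff hx)).differentiableWithinAt) (fun x hx => ?_)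
      hx₀ (funext fun j => h₀ j (by lia))
    obtain ⟨C, hCx⟩ := hC x hx
    refine ⟨max 1 (|C| * (m + 1)), ?_⟩
    filter_upwards [hCx, hUo.mem_nhds hx] with y hy hyU
    have sum_le : ∑ j ∈ Finset.range (m + 1), ‖iteratedFDeriv ℝ j f y‖ ≤ (m + 1) * ‖jet y‖ := by
      rw [Finset.sum_range]
      exact (Finset.sum_le_card_nsmul _ _ _ fun j _ => norm_le_pi_norm (jet y) j).trans_eq
        (by simp)
    rw [fderiv_pi (hdiff hyU)]
    refine ContinuousLinearMap.norm_pi_le_of_le (fun j => ?_) (by positivity)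
    rw [norm_fderiv_iteratedFDeriv]
    obtain hj | hj : (j : ℕ) + 1 < m + 1 ∨ (j : ℕ) = m := by lia
    · calc ‖iteratedFDeriv ℝ (j + 1) f y‖ ≤ 1 * ‖jet y‖ :=
            (norm_le_pi_norm (jet y) ⟨j + 1, hj⟩).trans_eq (one_mul _).symm
        _ ≤ _ := by gcongr; exact le_max_left _ _
    · calc ‖iteratedFDeriv ℝ (j + 1) f y‖
          ≤ C * ∑ j ∈ Finset.range (m + 1), ‖iteratedFDeriv ℝ j f y‖ := by rwa [hj]
        _ ≤ |C| * ((m + 1) * ‖jet y‖) := by gcongr; exact le_abs_self C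
        _ = |C| * (m + 1) * ‖jet y‖ := (mul_assoc _ _ _).symm
        _ ≤ _ := by gcongr; exact le_max_right _ _
  intro x hx
  have h0 : iteratedFDeriv ℝ 0 f x = 0 := congrFun (hjet hx) 0
  rw [Pi.zero_apply, ← iteratedFDeriv_zero_apply (𝕜 := ℝ) (f := f) (x := x) ![], h0]
  rfl

end UniqueContinuation

section KillingTensors

set_option maxSynthPendingDepth 3
open scoped Topology

variable {E F : Type*} [NormedAddCommGroup E] [NormedSpace ℝ E]
  [NormedAddCommGroup F] [NormedSpace ℝ F] {U : Set E} {x : E}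

theorem map_iteratedFDeriv_eq_zero {G : Type*} [NormedAddCommGroup G] [NormedSpace ℝ G]
    (ℓ : F →L[ℝ] G) {n : ℕ} {f : E → F} (hf : ContDiffAt ℝ n f x)
    (h : ∀ᶠ y in 𝓝 x, ℓ (f y) = 0) (m : Fin n → E) : ℓ (iteratedFDeriv ℝ n f x m) = 0 := by
  have hcomp := DFunLike.congr_fun (ℓ.iteratedFDeriv_comp_left hf le_rfl) m
  have hzero : ℓ ∘ f =ᶠ[𝓝 x] fun _ => 0 := h
  rw [(hzero.iteratedFDeriv ℝ n).self_of_nhds, iteratedFDeriv_fun_zero] at hcomp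
  exact hcomp.symm

theorem iteratedFDeriv_three_swap_left {f : E → F} (hf : ContDiffAt ℝ 3 f x) (a b c : E) :
    iteratedFDeriv ℝ 3 f x ![a, b, c] = iteratedFDeriv ℝ 3 f x ![b, a, c] := by
  have hsymm : IsSymmSndFDerivAt ℝ (fderiv ℝ f) x :=
    (hf.fderiv_right (m := 2) (by norm_num)).isSymmSndFDerivAt (by simp)
  simp only [iteratedFDeriv_succ_apply_right, iteratedFDeriv_zero_apply]
  exact congr($(hsymm a b) c)

theorem iteratedFDeriv_three_swap_right {f : E → F} (hf : ContDiffAt ℝ 3 f x) (a b c : E) :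
    iteratedFDeriv ℝ 3 f x ![a, b, c] = iteratedFDeriv ℝ 3 f x ![a, c, b] := by
  have hsymm : ∀ᶠ y in 𝓝 x, (ContinuousLinearMap.apply ℝ F c ∘L ContinuousLinearMap.apply ℝ _ b -
      ContinuousLinearMap.apply ℝ F b ∘L ContinuousLinearMap.apply ℝ _ c)
        (fderiv ℝ (fderiv ℝ f) y) = 0 := by
    filter_upwards [hf.eventually (by simp)] with y hy
    exact sub_eq_zero.2 ((hy.isSymmSndFDerivAt (by simp; norm_num)) b c)
  have := map_iteratedFDeriv_eq_zero (n := 1) _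
    ((hf.fderiv_right (m := 2) (by norm_num)).fderiv_right (m := 1) (by norm_num)) hsymm ![a]
  rw [iteratedFDeriv_one_apply] at this
  simp only [iteratedFDeriv_succ_apply_right, iteratedFDeriv_zero_apply]
  exact sub_eq_zero.1 this

theorem sum_perm_eq_zero_of_forall_diag_eq_zero {P : E →L[ℝ] E →L[ℝ] E →L[ℝ] F}
    (h : ∀ v, P v v v = 0) (a b c : E) :
    P a b c + P a c b + P b a c + P b c a + P c a b + P c b a = 0 := by
  have habc := h (a + b + c)
  have hab := h (a + b)
  have hac := h (a + c)
  have hbc := h (b + c)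
  simp only [map_add, _root_.add_apply] at habc hab hac hbc
  linear_combination (norm := module) habc - hab - hac - hbc + h a + h b + h c

/- The Killing equation has finite type: for symmetric tensor fields, the symmetries of third
derivatives recover all of them from their symmetrisations `r` over the last three slots. -/
theorem eq_of_cyclic_sum_last_eq {V : Type*} {u r : V → V → V → V → V → ℝ}
    (swap₁₂ : ∀ a b c i j, u a b c i j = u b a c i j)
    (swap₂₃ : ∀ a b c i j, u a b c i j = u a c b i j)
    (swap₄₅ : ∀ a b c i j, u a b c i j = u a b c j i)
    (cyclic : ∀ a b k i j, u a b k i j + u a b i j k + u a b j k i = r a b k i j) (a b c i j : V) :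
    u a b c i j = (r a b c i j + r a c b i j + r b c a i j + r i j a b c) / 3 -
      (r a i b c j + r b i a c j + r c i a b j + r a j b c i + r b j a c i + r c j a b i) / 6 := by
  simp only [← cyclic]
  grind

theorem abs_le_of_abs_cyclic_sum_last_le {V : Type*} [Norm V] {N : ℝ} {u : V → V → V → V → V → ℝ}
    (swap₁₂ : ∀ a b c i j, u a b c i j = u b a c i j)
    (swap₂₃ : ∀ a b c i j, u a b c i j = u a c b i j)
    (swap₄₅ : ∀ a b c i j, u a b c i j = u a b c j i)
    (cyclic : ∀ a b k i j, |u a b k i j + u a b i j k + u a b j k i| ≤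
      N * (‖a‖ * ‖b‖ * ‖k‖ * ‖i‖ * ‖j‖)) (a b c i j : V) :
    |u a b c i j| ≤ 7 / 3 * N * (‖a‖ * ‖b‖ * ‖c‖ * ‖i‖ * ‖j‖) := by
  let r (a b k i j : V) : ℝ := u a b k i j + u a b i j k + u a b j k i
  have bound (a b k i j : V) := abs_le.1 (cyclic a b k i j)
  have combination := eq_of_cyclic_sum_last_eq (r := r) swap₁₂ swap₂₃ swap₄₅
    (fun _ _ _ _ _ => rfl) a b c i j
  have h₁ := bound a b c i j
  have h₂ := bound a c b i j
  have h₃ := bound b c a i j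
  have h₄ := bound i j a b c
  have h₅ := bound a i b c j
  have h₆ := bound b i a c j
  have h₇ := bound c i a b j
  have h₈ := bound a j b c i
  have h₉ := bound b j a c i
  have h₁₀ := bound c j a b i
  rw [combination, abs_le]
  simp only [r]
  constructor <;> linarith

theorem abs_cyclic_sum_le_of_diag_eq {T Q : E →L[ℝ] E →L[ℝ] E →L[ℝ] ℝ}
    (hsymm : ∀ a b c, T a b c = T a c b) (hdiag : ∀ v, T v v v = Q v v v) (a b c : E) :
    |T a b c + T b c a + T c a b| ≤ 3 * ‖Q‖ * (‖a‖ * ‖b‖ * ‖c‖) := by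
  have bound (a b c : E) : -(‖Q‖ * ‖a‖ * ‖b‖ * ‖c‖) ≤ Q a b c ∧
      Q a b c ≤ ‖Q‖ * ‖a‖ * ‖b‖ * ‖c‖ :=
    abs_le.1 <| (ContinuousLinearMap.le_opNorm (Q a b) c).trans <|
      mul_le_mul_of_nonneg_right (Q.le_opNorm₂ a b) (norm_nonneg c)
  have polarised := sum_perm_eq_zero_of_forall_diag_eq_zero (P := T - Q)
    (fun v => sub_eq_zero.2 (hdiag v)) a b c
  simp only [_root_.sub_apply] at polarised
  have h₁ := bound a b c
  have h₂ := bound a c b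
  have h₃ := bound b a c
  have h₄ := bound b c a
  have h₅ := bound c a b
  have h₆ := bound c b a
  rw [abs_le]
  constructor <;> linarith [hsymm a b c, hsymm b c a, hsymm c a b]

theorem norm_iteratedFDeriv_three_le {h : E → E →L[ℝ] E →L[ℝ] ℝ}
    {Q : E → E →L[ℝ] E →L[ℝ] E →L[ℝ] ℝ} (hh : ContDiffAt ℝ 3 h x) (hQ : ContDiffAt ℝ 2 Q x)
    (hsymm : ∀ᶠ y in 𝓝 x, ∀ v w, h y v w = h y w v)
    (hdiag : ∀ᶠ y in 𝓝 x, ∀ v, fderiv ℝ h y v v v = Q y v v v) :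
    ‖iteratedFDeriv ℝ 3 h x‖ ≤ 7 * ‖iteratedFDeriv ℝ 2 Q x‖ := by
  have fderiv_jet (a b c : E) :
      iteratedFDeriv ℝ 2 (fderiv ℝ h) x ![a, b] c = iteratedFDeriv ℝ 3 h x ![a, b, c] := by
    simp only [iteratedFDeriv_succ_apply_right, iteratedFDeriv_zero_apply]
    rfl
  have swap₄₅ (a b c i j : E) :
      iteratedFDeriv ℝ 3 h x ![a, b, c] i j = iteratedFDeriv ℝ 3 h x ![a, b, c] j i :=
    sub_eq_zero.1 <| map_iteratedFDeriv_eq_zero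
      (ContinuousLinearMap.apply ℝ ℝ j ∘L ContinuousLinearMap.apply ℝ _ i -
        ContinuousLinearMap.apply ℝ ℝ i ∘L ContinuousLinearMap.apply ℝ _ j) hh
      (hsymm.mono fun y hy => sub_eq_zero.2 (hy i j)) ![a, b, c]
  have diag (a b v : E) : iteratedFDeriv ℝ 2 (fderiv ℝ h) x ![a, b] v v v =
      iteratedFDeriv ℝ 2 Q x ![a, b] v v v := by
    have hdh : ContDiffAt ℝ 2 (fderiv ℝ h) x := hh.fderiv_right (by norm_num)
    have := map_iteratedFDeriv_eq_zero (ContinuousLinearMap.apply ℝ ℝ v ∘L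
      ContinuousLinearMap.apply ℝ _ v ∘L ContinuousLinearMap.apply ℝ _ v) (hdh.sub hQ)
      (hdiag.mono fun y hy => sub_eq_zero.2 (hy v)) ![a, b]
    rw [fun_iteratedFDeriv_sub_apply hdh hQ] at this
    exact sub_eq_zero.1 this
  have cyclic (a b c i j : E) : |iteratedFDeriv ℝ 3 h x ![a, b, c] i j +
      iteratedFDeriv ℝ 3 h x ![a, b, i] j c + iteratedFDeriv ℝ 3 h x ![a, b, j] c i| ≤
      3 * ‖iteratedFDeriv ℝ 2 Q x‖ * (‖a‖ * ‖b‖ * ‖c‖ * ‖i‖ * ‖j‖) := by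
    have norm_le : ‖iteratedFDeriv ℝ 2 Q x ![a, b]‖ ≤ ‖iteratedFDeriv ℝ 2 Q x‖ * (‖a‖ * ‖b‖) := by
      simpa only [Fin.prod_univ_two, cons_val_zero, cons_val_one] using
        (iteratedFDeriv ℝ 2 Q x).le_opNorm ![a, b]
    simp only [← fderiv_jet]
    refine (abs_cyclic_sum_le_of_diag_eq (fun k i j => ?_) (diag a b) c i j).trans ?_
    · simpa only [fderiv_jet] using swap₄₅ a b k i j
    · calc 3 * ‖iteratedFDeriv ℝ 2 Q x ![a, b]‖ * (‖c‖ * ‖i‖ * ‖j‖)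
          ≤ 3 * (‖iteratedFDeriv ℝ 2 Q x‖ * (‖a‖ * ‖b‖)) * (‖c‖ * ‖i‖ * ‖j‖) := by gcongr
        _ = _ := by ring
  refine ContinuousMultilinearMap.opNorm_le_bound (by positivity) fun m => ?_
  refine ContinuousLinearMap.opNorm_le_bound₂ _ (by positivity) fun i j => ?_
  have hm : m = ![m 0, m 1, m 2] := by ext k; fin_cases k <;> rfl
  rw [Fin.prod_univ_three, hm]
  refine (abs_le_of_abs_cyclic_sum_last_le
    (fun a b c i j => congr($(iteratedFDeriv_three_swap_left hh a b c) i j))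
    (fun a b c i j => congr($(iteratedFDeriv_three_swap_right hh a b c) i j)) swap₄₅ cyclic
    (m 0) (m 1) (m 2) i j).trans_eq ?_
  simp only [cons_val_zero, cons_val_one, cons_val]
  ring

theorem exists_norm_iteratedFDeriv_bilinear_le {F' G : Type*} [NormedAddCommGroup F']
    [NormedSpace ℝ F'] [NormedAddCommGroup G] [NormedSpace ℝ G] (B : F →L[ℝ] F' →L[ℝ] G)
    {f : E → F} {g : E → F'} {n : ℕ} (hf : ContDiffAt ℝ n f x) (hg : ContDiffAt ℝ n g x) :
    ∃ C, ∀ᶠ y in 𝓝 x, ‖iteratedFDeriv ℝ n (fun z => B (f z) (g z)) y‖ ≤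
      C * ∑ j ∈ Finset.range (n + 1), ‖iteratedFDeriv ℝ j g y‖ := by
  have bounded : ∀ᶠ y in 𝓝 x, ∀ i ∈ Finset.range (n + 1),
      ‖iteratedFDeriv ℝ i f y‖ < ‖iteratedFDeriv ℝ i f x‖ + 1 := by
    refine (Filter.eventually_all_finset _).2 fun i hi => ?_
    have hcont : ContinuousAt (iteratedFDeriv ℝ i f) x :=
      (hf.iteratedFDeriv_right (m := 0) (by
        have := Finset.mem_range_succ_iff.1 hi
        rw [zero_add]; exact_mod_cast this)).continuousAt
    exact hcont.norm.eventually_lt_const (lt_add_one _)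
  refine ⟨‖B‖ * ∑ i ∈ Finset.range (n + 1), n.choose i * (‖iteratedFDeriv ℝ i f x‖ + 1), ?_⟩
  filter_upwards [bounded, hf.eventually (by simp), hg.eventually (by simp)] with y hy hfy hgy
  refine (norm_iteratedFDeriv_bilinear_le B hfy hgy).trans ?_
  rw [mul_assoc, Finset.sum_mul]
  gcongr with i hi
  · exact (hy i hi).le
  · exact Finset.single_le_sum (f := fun j => ‖iteratedFDeriv ℝ j g y‖) (fun _ _ => norm_nonneg _)
      (Finset.mem_range_succ_iff.2 (n.sub_le i))

theorem eqOn_zero_of_fderiv_diag_eq {h : E → E →L[ℝ] E →L[ℝ] ℝ}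
    {S : E → (E →L[ℝ] ℝ) →L[ℝ] E →L[ℝ] E →L[ℝ] ℝ} {x₀ : E} (hUo : IsOpen U)
    (hUc : IsPreconnected U) (hh : ContDiffOn ℝ 3 h U) (hS : ContDiffOn ℝ 2 S U)
    (hsymm : ∀ y ∈ U, ∀ v w, h y v w = h y w v)
    (hdiag : ∀ y ∈ U, ∀ v, fderiv ℝ h y v v v = S y (h y v) v v) (hx₀ : x₀ ∈ U)
    (h₀ : VanishesToOrder 2 h x₀) : Set.EqOn h 0 U := by
  refine eqOn_zero_of_norm_iteratedFDeriv_succ_le (m := 2) hUo hUc (mod_cast hh) (fun x hx => ?_)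
    hx₀ h₀
  have hUx := hUo.mem_nhds hx
  have hhx : ContDiffAt ℝ 2 h x := (hh.contDiffAt hUx).of_le (by norm_num)
  obtain ⟨C, hC⟩ := exists_norm_iteratedFDeriv_bilinear_le
    (ContinuousLinearMap.compL ℝ E (E →L[ℝ] ℝ) (E →L[ℝ] E →L[ℝ] ℝ)) (n := 2)
    (mod_cast hS.contDiffAt hUx) (mod_cast hhx)
  refine ⟨7 * C, ?_⟩
  filter_upwards [hC, (hh.contDiffAt hUx).eventually (by simp),
    (hS.contDiffAt hUx).eventually (by simp), hhx.eventually (by simp),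
    eventually_mem_nhds_iff.2 hUx] with y hCy hh3 hS2 hh2 hUy
  refine (norm_iteratedFDeriv_three_le hh3 (hS2.clm_comp hh2)
    (Filter.mem_of_superset hUy hsymm) (Filter.mem_of_superset hUy hdiag)).trans ?_
  rw [mul_assoc]
  gcongr
  exact hCy

end KillingTensors

section MatrixFields

set_option maxSynthPendingDepth 3
open scoped Topology Matrix.Norms.Operator

section Calculus

variable {ι E : Type*} [Fintype ι] [NormedAddCommGroup E] [NormedSpace ℝ E] {U : Set E} {x : E}
  {k : WithTop ℕ∞} {A : E → Matrix ι ι ℝ}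

theorem contDiffWithinAt_matrix_iff :
    ContDiffWithinAt ℝ k A U x ↔ ∀ i j, ContDiffWithinAt ℝ k (fun x => A x i j) U x := by
  classical
  let e : Matrix ι ι ℝ ≃L[ℝ] (ι → ι → ℝ) := (Matrix.ofLinearEquiv ℝ).symm.toContinuousLinearEquiv
  rw [← e.comp_contDiffWithinAt_iff]
  simp only [contDiffWithinAt_pi]
  rfl

theorem contDiffAt_matrix_iff :
    ContDiffAt ℝ k A x ↔ ∀ i j, ContDiffAt ℝ k (fun x => A x i j) x :=
  contDiffWithinAt_matrix_iff

theorem contDiffOn_matrix_iff :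
    ContDiffOn ℝ k A U ↔ ∀ i j, ContDiffOn ℝ k (fun x => A x i j) U :=
  ⟨fun h i j x hx => contDiffWithinAt_matrix_iff.1 (h x hx) i j, fun h x hx =>
    contDiffWithinAt_matrix_iff.2 fun i j => h i j x hx⟩

theorem contDiffAt_matrix_inv [DecidableEq ι] (hA : ContDiffAt ℝ k A x) (h : IsUnit (A x)) :
    ContDiffAt ℝ k (fun y => (A y)⁻¹) x := by
  obtain ⟨u, hu⟩ := h
  simp only [nonsing_inv_eq_ringInverse]
  exact ContDiffAt.comp x (hu ▸ contDiffAt_ringInverse ℝ u) hA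

/-- The action of matrices on vectors, as a continuous bilinear map. -/
noncomputable def mulVecL : Matrix ι ι ℝ →L[ℝ] (ι → ℝ) →L[ℝ] ι → ℝ :=
  (mulVecBilin ℝ ℝ).toContinuousBilinearMap

theorem mulVecL_apply (A : Matrix ι ι ℝ) (v : ι → ℝ) : mulVecL A v = A *ᵥ v := rfl

/-- The bilinear form `(v, w) ↦ (A *ᵥ v) ⬝ᵥ w` of a matrix, as a continuous linear map in `A`. -/
noncomputable def bilinL : Matrix ι ι ℝ →L[ℝ] (ι → ℝ) →L[ℝ] (ι → ℝ) →L[ℝ] ℝ :=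
  ContinuousLinearMap.compL ℝ (ι → ℝ) (ι → ℝ) ((ι → ℝ) →L[ℝ] ℝ)
    (dotProductBilin ℝ ℝ).toContinuousBilinearMap ∘L mulVecL

theorem bilinL_apply (A : Matrix ι ι ℝ) (v w : ι → ℝ) : bilinL A v w = A *ᵥ v ⬝ᵥ w := rfl

theorem mulVec_dotProduct_of_isSymm {A : Matrix ι ι ℝ} (hA : A.IsSymm) (v w : ι → ℝ) :
    A *ᵥ v ⬝ᵥ w = v ⬝ᵥ A *ᵥ w := by
  rw [dotProduct_mulVec, ← mulVec_transpose, hA.eq]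

end Calculus

variable {ι : Type*} [Fintype ι] {G L N : (ι → ℝ) → Matrix ι ι ℝ} {U : Set (ι → ℝ)} {x : ι → ℝ}

/-- The function `(x, p) ↦ ∑ i j, L x i j * p i * p j` on phase space, quadratic in the momenta, of
the symmetric contravariant tensor field `L`. -/
def quadraticObservable (L : (ι → ℝ) → Matrix ι ι ℝ) (z : (ι → ℝ) × (ι → ℝ)) : ℝ :=
  ∑ i, ∑ j, L z.1 i j * z.2 i * z.2 j

theorem quadraticObservable_eq_bilinL (L : (ι → ℝ) → Matrix ι ι ℝ) :
    quadraticObservable L = fun z => bilinL (L z.1) z.2 z.2 := by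
  ext z
  simp only [quadraticObservable, bilinL_apply, dotProduct, mulVec, Finset.sum_mul]
  exact Finset.sum_congr rfl fun i _ => Finset.sum_congr rfl fun j _ => mul_right_comm _ _ _

theorem hasFDerivAt_quadraticObservable (hL : DifferentiableAt ℝ L x) (p : ι → ℝ) :
    HasFDerivAt (quadraticObservable L)
      (((bilinL.flip p).flip p ∘L fderiv ℝ L x).coprod (bilinL (L x) p + (bilinL (L x)).flip p))
      (x, p) := by
  have hfst : HasFDerivAt (fun z : (ι → ℝ) × (ι → ℝ) => bilinL (L z.1))
      (bilinL ∘L fderiv ℝ L x ∘L ContinuousLinearMap.fst ℝ _ _) (x, p) :=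
    bilinL.hasFDerivAt.comp _ (hL.hasFDerivAt.comp (x, p) hasFDerivAt_fst)
  rw [quadraticObservable_eq_bilinL]
  refine ((hfst.clm_apply hasFDerivAt_snd).clm_apply hasFDerivAt_snd).congr_fderiv ?_
  ext v
  · simp only [ContinuousLinearMap.flip_add, _root_.add_apply, ContinuousLinearMap.add_comp,
      ContinuousLinearMap.comp_apply, ContinuousLinearMap.inl_apply, map_zero, _root_.zero_apply,
      ContinuousLinearMap.coe_snd', ContinuousLinearMap.flip_apply,
      ContinuousLinearMap.coe_fst', zero_add, ContinuousLinearMap.coprod_comp_inl]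
    rfl
  · simp

theorem linearIndependent_domRestrict_of_fderiv_quadraticObservable {κ : Type*} [Finite κ]
    {K : κ → (ι → ℝ) → Matrix ι ι ℝ} {z : (ι → ℝ) × (ι → ℝ)} (hUo : IsOpen U) (hz : z.1 ∈ U)
    (hK : ∀ a i j, ContDiffOn ℝ 1 (fun x => K a x i j) U)
    (hli : LinearIndependent ℝ fun a => fderiv ℝ (quadraticObservable (K a)) z) :
    LinearIndependent ℝ fun a => U.domRestrict (K a) := by
  have := Fintype.ofFinite κ
  refine Fintype.linearIndependent_iff.2 fun c hc => Fintype.linearIndependent_iff.1 hli c ?_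
  have combination : (fun w => ∑ a, c a • quadraticObservable (K a) w) =ᶠ[𝓝 z] fun _ => 0 := by
    filter_upwards [continuous_fst.continuousAt (hUo.mem_nhds hz)] with w hw
    have hcw : ∑ a, c a • K a w.1 = 0 := by
      have := congrFun hc ⟨w.1, hw⟩
      rwa [Finset.sum_apply] at this
    have := congr(bilinL $hcw w.2 w.2)
    simpa only [quadraticObservable_eq_bilinL, map_sum, map_smul, _root_.sum_apply,
      _root_.smul_apply, map_zero, _root_.zero_apply] using this
  have differentiable (a : κ) : DifferentiableAt ℝ (quadraticObservable (K a)) z :=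
    (hasFDerivAt_quadraticObservable (((contDiffOn_matrix_iff.2 (hK a)).differentiableOn
      one_ne_zero).differentiableAt (hUo.mem_nhds hz)) z.2).differentiableAt
  have fderiv_sum : fderiv ℝ (fun w => ∑ a, c a • quadraticObservable (K a) w) z =
      ∑ a, c a • fderiv ℝ (quadraticObservable (K a)) z :=
    (HasFDerivAt.fun_sum fun a _ => (differentiable a).hasFDerivAt.fun_const_smul (c a)).fderiv
  rw [← fderiv_sum, combination.fderiv_eq, fderiv_fun_const, Pi.zero_apply]

theorem fderiv_quadraticObservable_apply (hL : DifferentiableAt ℝ L x) (hs : (L x).IsSymm)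
    (p v w : ι → ℝ) : fderiv ℝ (quadraticObservable L) (x, p) (v, w) =
      bilinL (fderiv ℝ L x v) p p + 2 * bilinL (L x) p w := by
  have swap : bilinL (L x) w p = bilinL (L x) p w := by
    rw [bilinL_apply, mulVec_dotProduct_of_isSymm hs, dotProduct_comm, bilinL_apply]
  rw [(hasFDerivAt_quadraticObservable hL p).fderiv, two_mul]
  exact congrArg (fun t => bilinL (fderiv ℝ L x v) p p + (bilinL (L x) p w + t)) swap

theorem fderiv_matrix_mul_apply {A B : (ι → ℝ) → Matrix ι ι ℝ} (hA : DifferentiableAt ℝ A x)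
    (hB : DifferentiableAt ℝ B x) (v : ι → ℝ) : fderiv ℝ (fun y => A y * B y) x v =
      fderiv ℝ A x v * B x + A x * fderiv ℝ B x v := by
  classical
  exact (DFunLike.congr_fun (hA.hasFDerivAt.mul' hB.hasFDerivAt).fderiv v).trans (add_comm _ _)

/-- The cubic form `{pᵀ L p, ½ pᵀ G p}` at `(x, p)`. It vanishes identically in `p` exactly when the
symmetric tensor field `L` satisfies the Killing equation of the inverse metric `G` at `x`. -/
noncomputable def killingDefect (G L : (ι → ℝ) → Matrix ι ι ℝ) (x p : ι → ℝ) : ℝ :=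
  bilinL (fderiv ℝ L x (G x *ᵥ p) - fderiv ℝ G x (L x *ᵥ p)) p p

theorem poisson_quadraticObservable {n : ℕ} {G L : (Fin n → ℝ) → Matrix (Fin n) (Fin n) ℝ}
    {x : Fin n → ℝ} (hG : DifferentiableAt ℝ G x) (hL : DifferentiableAt ℝ L x)
    (hGs : (G x).IsSymm) (hLs : (L x).IsSymm) (p : Fin n → ℝ) :
    poisson (fun z => (1 / 2 : ℝ) * quadraticObservable G z) (quadraticObservable L) (x, p) =
      -killingDefect G L x p := by
  have sum_single (φ : (Fin n → ℝ) →L[ℝ] ℝ) (v : Fin n → ℝ) :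
      ∑ i, φ (Pi.single i 1) * v i = φ v := by
    conv_rhs => rw [pi_eq_sum_univ' v, map_sum]
    simp only [map_smul, smul_eq_mul, mul_comm]
  have vertical (A : Matrix (Fin n) (Fin n) ℝ) (i : Fin n) :
      bilinL A p (Pi.single i 1) = (A *ᵥ p) i := by
    rw [bilinL_apply, dotProduct_single, mul_one]
  have horizontal (A : (Fin n → ℝ) → Matrix (Fin n) (Fin n) ℝ) (v : Fin n → ℝ) :
      ∑ i, bilinL (fderiv ℝ A x (Pi.single i 1)) p p * v i = bilinL (fderiv ℝ A x v) p p :=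
    sum_single ((bilinL.flip p).flip p ∘L fderiv ℝ A x) v
  have half : fderiv ℝ (fun z => (1 / 2 : ℝ) * quadraticObservable G z) (x, p) =
      (1 / 2 : ℝ) • fderiv ℝ (quadraticObservable G) (x, p) :=
    congrFun (fderiv_const_smul_field (1 / 2 : ℝ)) _
  simp only [poisson, half, _root_.smul_apply, fderiv_quadraticObservable_apply hG hGs,
    fderiv_quadraticObservable_apply hL hLs, map_zero, mul_zero, add_zero, zero_add, smul_eq_mul,
    vertical, _root_.zero_apply]
  simp only [killingDefect, map_sub, _root_.sub_apply, neg_sub]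
  rw [← horizontal, ← horizontal, ← Finset.sum_sub_distrib]
  exact Finset.sum_congr rfl fun i _ => by ring

theorem killingDefect_sum_smul {κ : Type*} [Fintype κ] {c : κ → (ι → ℝ) → ℝ}
    {K : κ → (ι → ℝ) → Matrix ι ι ℝ}
    (hc : ∀ a, DifferentiableAt ℝ (c a) x) (hK : ∀ a, DifferentiableAt ℝ (K a) x) (p : ι → ℝ) :
    killingDefect G (fun y => ∑ a, c a y • K a y) x p = ∑ a, c a x * killingDefect G (K a) x p +
      ∑ a, fderiv ℝ (c a) x (G x *ᵥ p) * bilinL (K a x) p p := by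
  have leibniz (v : ι → ℝ) : fderiv ℝ (fun y => ∑ a, c a y • K a y) x v =
      ∑ a, (c a x • fderiv ℝ (K a) x v + fderiv ℝ (c a) x v • K a x) := by
    have := (HasFDerivAt.fun_sum fun a (_ : a ∈ Finset.univ) =>
      (hc a).hasFDerivAt.fun_smul (hK a).hasFDerivAt).fderiv
    refine (DFunLike.congr_fun this v).trans ?_
    exact _root_.sum_apply ..
  simp only [killingDefect, leibniz, sum_mulVec, smul_mulVec, map_sum, map_smul, map_sub, map_add,
    _root_.sum_apply, _root_.add_apply, _root_.sub_apply, _root_.smul_apply, smul_eq_mul,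
    Finset.sum_add_distrib, mul_sub, Finset.sum_sub_distrib]
  ring

theorem killingDefect_add {M : (ι → ℝ) → Matrix ι ι ℝ} (hL : DifferentiableAt ℝ L x)
    (hM : DifferentiableAt ℝ M x) (p : ι → ℝ) :
    killingDefect G (fun y => L y + M y) x p = killingDefect G L x p + killingDefect G M x p := by
  have hadd : fderiv ℝ (fun y => L y + M y) x = fderiv ℝ L x + fderiv ℝ M x := fderiv_fun_add hL hM
  simp only [killingDefect, hadd, add_mulVec, map_add, map_sub, _root_.add_apply,
    _root_.sub_apply]
  ring

theorem killingDefect_const_smul (hL : DifferentiableAt ℝ L x) (c : ℝ) (p : ι → ℝ) :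
    killingDefect G (fun y => c • L y) x p = c * killingDefect G L x p := by
  have hsmul : fderiv ℝ (fun y => c • L y) x = c • fderiv ℝ L x := fderiv_fun_const_smul hL c
  simp only [killingDefect, hsmul, smul_mulVec, map_smul, map_sub, _root_.smul_apply,
    _root_.sub_apply, smul_eq_mul, mul_sub]

theorem killingDefect_eq_zero_of_vanishesToOrder (h : VanishesToOrder 1 L x) (p : ι → ℝ) :
    killingDefect G L x p = 0 := by
  have hd : fderiv ℝ L x = 0 := h.fderiv_eq_zero
  simp only [killingDefect, hd, h.eq_zero, zero_mulVec, map_zero, _root_.zero_apply, sub_zero]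

/-- The space of symmetric contravariant two-tensor fields on `U`, of class `C³`, that satisfy the
Killing equation of the inverse metric `G`. -/
def killingTensors (G : (ι → ℝ) → Matrix ι ι ℝ) (hU : IsOpen U) :
    Submodule ℝ ((ι → ℝ) → Matrix ι ι ℝ) where
  carrier := {L | ContDiffOn ℝ 3 L U ∧ (∀ x ∈ U, (L x).IsSymm) ∧
    ∀ x ∈ U, ∀ p, killingDefect G L x p = 0}
  zero_mem' := ⟨contDiffOn_const, fun _ _ => isSymm_zero, fun _ _ =>
    killingDefect_eq_zero_of_vanishesToOrder fun _ _ => congrFun iteratedFDeriv_zero _⟩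
  add_mem' := by
    rintro L M ⟨hL, hLs, hLk⟩ ⟨hM, hMs, hMk⟩
    refine ⟨hL.add hM, fun x hx => (hLs x hx).add (hMs x hx), fun x hx p => ?_⟩
    have hLx := (hL.differentiableOn (by norm_num)).differentiableAt (hU.mem_nhds hx)
    have hMx := (hM.differentiableOn (by norm_num)).differentiableAt (hU.mem_nhds hx)
    rw [Pi.add_def, killingDefect_add hLx hMx, hLk x hx, hMk x hx, add_zero]
  smul_mem' := by
    rintro c L ⟨hL, hLs, hLk⟩
    refine ⟨contDiffOn_const.smul hL, fun x hx => (hLs x hx).smul c, fun x hx p => ?_⟩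
    have hLx := (hL.differentiableOn (by norm_num)).differentiableAt (hU.mem_nhds hx)
    rw [Pi.smul_def, killingDefect_const_smul hLx, hLk x hx, mul_zero]

theorem mem_killingTensors_of_poisson_eq_zero {n : ℕ} {G L : (Fin n → ℝ) → Matrix (Fin n) (Fin n) ℝ}
    {U : Set (Fin n → ℝ)} (hUo : IsOpen U) (hG : ContDiffOn ℝ 3 G U) (hL : ContDiffOn ℝ 3 L U)
    (hGs : ∀ x ∈ U, (G x).IsSymm) (hLs : ∀ x ∈ U, (L x).IsSymm)
    (h : ∀ z : (Fin n → ℝ) × (Fin n → ℝ), z.1 ∈ U →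
      poisson (fun z => (1 / 2 : ℝ) * quadraticObservable G z) (quadraticObservable L) z = 0) :
    L ∈ killingTensors G hUo := by
  refine ⟨hL, hLs, fun x hx p => neg_eq_zero.1 ?_⟩
  rw [← poisson_quadraticObservable
    ((hG.differentiableOn (by norm_num)).differentiableAt (hUo.mem_nhds hx))
    ((hL.differentiableOn (by norm_num)).differentiableAt (hUo.mem_nhds hx)) (hGs x hx) (hLs x hx)]
  exact h (x, p) hx

/- With `p = g v`, this is the covariant form `(∇_v N)(v, v)` of the defect. -/
theorem killingDefect_conj [DecidableEq ι] {g : (ι → ℝ) → Matrix ι ι ℝ}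
    (hG : DifferentiableAt ℝ G x) (hN : DifferentiableAt ℝ N x) (hg : DifferentiableAt ℝ g x)
    (hGs : (G x).IsSymm) (hNs : (N x).IsSymm) (hGg : ∀ᶠ y in 𝓝 x, G y * g y = 1) (v : ι → ℝ) :
    killingDefect G (fun y => G y * N y * G y) x (g x *ᵥ v) = bilinL (fderiv ℝ N x v) v v -
      (bilinL (fderiv ℝ g x v) ((G x * N x) *ᵥ v) v +
        bilinL (fderiv ℝ g x v) v ((G x * N x) *ᵥ v) -
        bilinL (fderiv ℝ g x ((G x * N x) *ᵥ v)) v v) := by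
  have hGgx : G x * g x = 1 := hGg.self_of_nhds
  have fderiv_conj : fderiv ℝ (fun y => G y * N y * G y) x v =
      fderiv ℝ G x v * N x * G x + G x * fderiv ℝ N x v * G x + G x * N x * fderiv ℝ G x v := by
    have hGN : DifferentiableAt ℝ (fun y => G y * N y) x := hG.mul hN
    rw [fderiv_matrix_mul_apply hGN hG, fderiv_matrix_mul_apply hG hN, add_mul]
  have fderiv_inv (w : ι → ℝ) : fderiv ℝ G x w * g x = -(G x * fderiv ℝ g x w) := by
    rw [eq_neg_iff_add_eq_zero, ← fderiv_matrix_mul_apply hG hg,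
      Filter.EventuallyEq.fderiv_eq (f := fun _ => 1) hGg,
      fderiv_fun_const]
    rfl
  have fderiv_inv' (w : ι → ℝ) : fderiv ℝ G x w = -(G x * fderiv ℝ g x w * G x) := by
    rw [← neg_mul, ← fderiv_inv, mul_assoc, mul_eq_one_comm.1 hGgx, mul_one]
  have raise : G x *ᵥ g x *ᵥ v = v := by rw [mulVec_mulVec, hGgx, one_mulVec]
  simp only [killingDefect, fderiv_conj, bilinL_apply, fderiv_inv', ← mulVec_mulVec,
    sub_mulVec, add_mulVec, neg_mulVec, add_dotProduct, sub_dotProduct, neg_dotProduct, raise,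
    mulVec_dotProduct_of_isSymm hGs, mulVec_dotProduct_of_isSymm hNs]
  ring

/-- A trilinear form in `w`, `b`, `c`, linear in the derivative `Γ` of the metric, that for `b = c`
is twice the Christoffel symbol of the first kind; only these diagonal values enter the Killing
equation. -/
noncomputable def christoffelL :
    ((ι → ℝ) →L[ℝ] (ι → ℝ) →L[ℝ] (ι → ℝ) →L[ℝ] ℝ) →L[ℝ]
      (ι → ℝ) →L[ℝ] (ι → ℝ) →L[ℝ] (ι → ℝ) →L[ℝ] ℝ :=
  let flip₁₂ := (ContinuousLinearMap.flipₗᵢ ℝ (ι → ℝ) (ι → ℝ)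
    ((ι → ℝ) →L[ℝ] ℝ)).toContinuousLinearEquiv.toContinuousLinearMap
  let flip₂₃ := ContinuousLinearMap.compL ℝ (ι → ℝ) _ _ (ContinuousLinearMap.flipₗᵢ ℝ (ι → ℝ)
    (ι → ℝ) ℝ).toContinuousLinearEquiv.toContinuousLinearMap
  flip₁₂ + flip₁₂ ∘L flip₂₃ - ContinuousLinearMap.id ℝ _

theorem christoffelL_apply (Γ : (ι → ℝ) →L[ℝ] (ι → ℝ) →L[ℝ] (ι → ℝ) →L[ℝ] ℝ) (w b c : ι → ℝ) :
    christoffelL Γ w b c = Γ b w c + Γ b c w - Γ w b c := rfl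

theorem contDiffOn_bilinL {k : WithTop ℕ∞} (hN : ContDiffOn ℝ k N U) :
    ContDiffOn ℝ k (fun y => bilinL (N y)) U :=
  (bilinL (ι := ι)).contDiff.comp_contDiffOn hN

theorem fderiv_bilinL_apply (hN : DifferentiableAt ℝ N x) (v : ι → ℝ) :
    fderiv ℝ (fun y => bilinL (N y)) x v = bilinL (fderiv ℝ N x v) :=
  DFunLike.congr_fun ((bilinL (ι := ι)).hasFDerivAt.comp x hN.hasFDerivAt).fderiv v

variable [DecidableEq ι]

/-- The vector of coefficients of a linear form on `ι → ℝ`, as a continuous linear map. -/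
noncomputable def formCoords : ((ι → ℝ) →L[ℝ] ℝ) →L[ℝ] ι → ℝ :=
  ContinuousLinearMap.pi fun i => ContinuousLinearMap.apply ℝ ℝ (Pi.single i 1)

theorem formCoords_bilinL (A : Matrix ι ι ℝ) (v : ι → ℝ) : formCoords (bilinL A v) = A *ᵥ v := by
  ext i
  exact dotProduct_single_one _ _

theorem contDiffOn_christoffelL_comp {g : (ι → ℝ) → Matrix ι ι ℝ} (hUo : IsOpen U)
    (hg : ContDiffOn ℝ 3 g U) (hG : ContDiffOn ℝ 2 G U) :
    ContDiffOn ℝ 2 (fun y => christoffelL (fderiv ℝ (fun z => bilinL (g z)) y) ∘L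
      mulVecL (G y) ∘L formCoords) U := by
  have hΓ : ContDiffOn ℝ 2 (fun y => christoffelL (fderiv ℝ (fun z => bilinL (g z)) y)) U :=
    (christoffelL (ι := ι)).contDiff.comp_contDiffOn
      ((contDiffOn_bilinL hg).fderiv_of_isOpen hUo (by norm_num))
  exact hΓ.clm_comp (((mulVecL (ι := ι)).contDiff.comp_contDiffOn hG).clm_comp contDiffOn_const)

/-- The covariant form of the contravariant tensor field `L`, its indices being lowered by the
metric `G⁻¹`. -/
noncomputable def lowered (G L : (ι → ℝ) → Matrix ι ι ℝ) (y : ι → ℝ) : Matrix ι ι ℝ :=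
  (G y)⁻¹ * L y * (G y)⁻¹

theorem isSymm_lowered (hGs : (G x).IsSymm) (hLs : (L x).IsSymm) : (lowered G L x).IsSymm := by
  simp only [IsSymm, lowered, transpose_mul, transpose_nonsing_inv, hGs.eq, hLs.eq, mul_assoc]

theorem mul_lowered_mul (hG : IsUnit (G x)) : G x * lowered G L x * G x = L x := by
  have hdet := (isUnit_iff_isUnit_det _).1 hG
  rw [lowered, ← mul_assoc, mul_nonsing_inv_cancel_left _ _ hdet,
    nonsing_inv_mul_cancel_right _ _ hdet]

theorem eq_zero_of_lowered_mulVec_eq_zero (hG : IsUnit (G x))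
    (h : ∀ v, lowered G L x *ᵥ v = 0) : L x = 0 := by
  refine ext_of_mulVec_single fun i => ?_
  simp only [← mul_lowered_mul (L := L) hG, ← mulVec_mulVec, h, mulVec_zero, zero_mulVec]

theorem contDiffAt_lowered {k : WithTop ℕ∞} (hG : ContDiffAt ℝ k G x) (hGinv : IsUnit (G x))
    (hL : ContDiffAt ℝ k L x) : ContDiffAt ℝ k (lowered G L) x :=
  ((contDiffAt_matrix_inv hG hGinv).mul hL).mul (contDiffAt_matrix_inv hG hGinv)

theorem VanishesToOrder.bilinL_lowered {m : ℕ} (h : VanishesToOrder m L x)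
    (hG : ContDiffAt ℝ m G x) (hGinv : IsUnit (G x)) (hL : ContDiffAt ℝ m L x) :
    VanishesToOrder m (fun y => bilinL (lowered G L y)) x := by
  have hg : ContDiffAt ℝ m (fun y => (G y)⁻¹) x := contDiffAt_matrix_inv hG hGinv
  exact (h.bilinear_right (ContinuousLinearMap.mul ℝ (Matrix ι ι ℝ)) hg hL).bilinear_left
    (ContinuousLinearMap.compL ℝ _ _ _ (bilinL (ι := ι)) ∘L
      ContinuousLinearMap.mul ℝ (Matrix ι ι ℝ)) (hg.mul hL) hg

theorem fderiv_bilinL_lowered_diag (hG : ContDiffAt ℝ 1 G x) (hL : ContDiffAt ℝ 1 L x)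
    (hGs : (G x).IsSymm) (hLs : (L x).IsSymm) (hGinv : ∀ᶠ y in 𝓝 x, IsUnit (G y))
    (killing : ∀ p, killingDefect G L x p = 0) (v : ι → ℝ) :
    fderiv ℝ (fun y => bilinL (lowered G L y)) x v v v =
      christoffelL (fderiv ℝ (fun y => bilinL (G y)⁻¹) x) ((G x * lowered G L x) *ᵥ v) v v := by
  have hGx := hGinv.self_of_nhds
  have hg := (contDiffAt_matrix_inv hG hGx).differentiableAt one_ne_zero
  have hN := (contDiffAt_lowered hG hGx hL).differentiableAt one_ne_zero
  have hev : L =ᶠ[𝓝 x] fun y => G y * lowered G L y * G y :=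
    hGinv.mono fun y hy => (mul_lowered_mul hy).symm
  have hGg : ∀ᶠ y in 𝓝 x, G y * (G y)⁻¹ = 1 :=
    hGinv.mono fun y hy => mul_nonsing_inv _ ((isUnit_iff_isUnit_det _).1 hy)
  have h := killing ((G x)⁻¹ *ᵥ v)
  rw [killingDefect, hev.fderiv_eq, hev.self_of_nhds, ← killingDefect,
    killingDefect_conj (hG.differentiableAt one_ne_zero) hN hg hGs (isSymm_lowered hGs hLs) hGg,
    sub_eq_zero] at h
  simpa only [christoffelL_apply, fderiv_bilinL_apply hN, fderiv_bilinL_apply hg] using h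

theorem eqOn_zero_of_mem_killingTensors {x₀ : ι → ℝ} (hUo : IsOpen U) (hUc : IsPreconnected U)
    (hG : ContDiffOn ℝ 3 G U) (hGs : ∀ x ∈ U, (G x).IsSymm) (hGinv : ∀ x ∈ U, IsUnit (G x))
    (hL : L ∈ killingTensors G hUo) (hx₀ : x₀ ∈ U) (h₀ : VanishesToOrder 2 L x₀) :
    Set.EqOn L 0 U := by
  obtain ⟨hL, hLs, killing⟩ := hL
  have contDiffAt {k : WithTop ℕ∞} {A : (ι → ℝ) → Matrix ι ι ℝ} (hA : ContDiffOn ℝ 3 A U)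
      (hk : k ≤ 3) (y) (hy : y ∈ U) : ContDiffAt ℝ k A y :=
    (hA.contDiffAt (hUo.mem_nhds hy)).of_le hk
  have hg : ContDiffOn ℝ 3 (fun y => (G y)⁻¹) U := fun y hy =>
    (contDiffAt_matrix_inv (contDiffAt hG le_rfl y hy) (hGinv y hy)).contDiffWithinAt
  have hN : ContDiffOn ℝ 3 (lowered G L) U := fun y hy =>
    (contDiffAt_lowered (contDiffAt hG le_rfl y hy) (hGinv y hy)
      (contDiffAt hL le_rfl y hy)).contDiffWithinAt
  have lowered_eq_zero : Set.EqOn (fun y => bilinL (lowered G L y)) 0 U := by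
    refine eqOn_zero_of_fderiv_diag_eq hUo hUc (contDiffOn_bilinL hN)
      (contDiffOn_christoffelL_comp hUo hg (hG.of_le (by norm_num))) (fun y hy v w => ?_)
      (fun y hy v => ?_) hx₀ (h₀.bilinL_lowered (contDiffAt hG (by norm_num) x₀ hx₀)
        (hGinv x₀ hx₀) (contDiffAt hL (by norm_num) x₀ hx₀))
    · rw [bilinL_apply, mulVec_dotProduct_of_isSymm (isSymm_lowered (hGs y hy) (hLs y hy)),
        dotProduct_comm, bilinL_apply]
    · simpa only [ContinuousLinearMap.comp_apply, formCoords_bilinL, mulVecL_apply, mulVec_mulVec]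
        using fderiv_bilinL_lowered_diag (contDiffAt hG (by norm_num) y hy)
          (contDiffAt hL (by norm_num) y hy) (hGs y hy) (hLs y hy)
          (Filter.eventually_of_mem (hUo.mem_nhds hy) hGinv) (killing y hy) v
  intro y hy
  refine eq_zero_of_lowered_mulVec_eq_zero (hGinv y hy) fun v => ?_
  rw [← formCoords_bilinL, show bilinL (lowered G L y) = 0 from lowered_eq_zero hy]
  exact map_zero _

end MatrixFields

section Algebra

variable {ι κ : Type*} [Fintype ι] [Fintype κ]

theorem eq_zero_of_sum_mul_sq_eq_zero {m : ι → (ι → ℝ) →ₗ[ℝ] ℝ}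
    (h : ∀ q, ∑ i, m i q * q i ^ 2 = 0) (i : ι) : m i = 0 := by
  classical
  have self (j : ι) : m j (Pi.single j 1) = 0 := by
    have := h (Pi.single j 1)
    rwa [Fintype.sum_eq_single j fun l hl => by rw [Pi.single_eq_of_ne hl]; ring,
      Pi.single_eq_same, one_pow, mul_one] at this
  refine LinearMap.pi_ext' fun j => LinearMap.ext_ring ?_
  change m i (Pi.single j 1) = 0
  obtain rfl | hij := eq_or_ne i j
  · exact self i
  have pair (t : ℝ) : t * m i (Pi.single j 1) + t ^ 2 * m j (Pi.single i 1) = 0 := by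
    have := h (Pi.single i 1 + t • Pi.single j 1)
    rw [Fintype.sum_eq_add i j hij fun l hl => by simp [hl.1, hl.2]] at this
    simpa [self, hij, hij.symm, mul_comm] using this
  linarith [pair 1, pair (-1)]

theorem eq_zero_of_sum_mul_quadratic_eq_zero [DecidableEq ι] {A : κ → Matrix ι ι ℝ}
    (hA : LinearIndependent ℝ A) {B : Matrix ι ι ℝ} (hB : IsUnit B)
    (hdiag : ∀ a, (B * A a * Bᵀ).IsDiag) {l : κ → (ι → ℝ) →ₗ[ℝ] ℝ}
    (h : ∀ p, ∑ a, l a p * (A a *ᵥ p ⬝ᵥ p) = 0) (a : κ) : l a = 0 := by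
  have hBt : IsUnit Bᵀ := (isUnit_transpose B).2 hB
  have quadratic (a : κ) (q : ι → ℝ) :
      A a *ᵥ Bᵀ *ᵥ q ⬝ᵥ Bᵀ *ᵥ q = ∑ i, (B * A a * Bᵀ) i i * q i ^ 2 := by
    rw [dotProduct_mulVec, vecMul_transpose, mulVec_mulVec, mulVec_mulVec]
    conv_lhs => rw [← (hdiag a).diagonal_diag]
    simp only [dotProduct, mulVec_diagonal, diag_apply]
    exact Finset.sum_congr rfl fun i _ => by ring
  have diag_comb (q : ι → ℝ) (i : ι) : ∑ a, l a (Bᵀ *ᵥ q) * (B * A a * Bᵀ) i i = 0 := by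
    have := eq_zero_of_sum_mul_sq_eq_zero
      (m := fun i => ∑ a, (B * A a * Bᵀ) i i • l a ∘ₗ Bᵀ.mulVecLin) (fun q => ?_) i
    · simpa only [LinearMap.sum_apply, LinearMap.smul_apply, LinearMap.comp_apply, smul_eq_mul,
        mulVecLin_apply, LinearMap.zero_apply, mul_comm] using DFunLike.congr_fun this q
    · simp only [LinearMap.sum_apply, LinearMap.smul_apply, LinearMap.comp_apply, smul_eq_mul,
        mulVecLin_apply, Finset.sum_mul]
      rw [Finset.sum_comm, ← h (Bᵀ *ᵥ q)]
      refine Finset.sum_congr rfl fun a _ => ?_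
      rw [quadratic, Finset.mul_sum]
      exact Finset.sum_congr rfl fun i _ => by ring
  have comb (q : ι → ℝ) : ∑ a, l a (Bᵀ *ᵥ q) • A a = 0 := by
    have conj : B * (∑ a, l a (Bᵀ *ᵥ q) • A a) * Bᵀ = 0 := by
      simp only [Finset.mul_sum, Finset.sum_mul, Matrix.mul_smul, Matrix.smul_mul]
      ext i j
      simp only [Matrix.sum_apply, Matrix.smul_apply, smul_eq_mul, Matrix.zero_apply]
      obtain rfl | hij := eq_or_ne i j
      · exact diag_comb q i
      · exact Finset.sum_eq_zero fun a _ => by rw [hdiag a hij, mul_zero]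
    exact hB.mul_right_eq_zero.1 (hBt.mul_left_eq_zero.1 conj)
  refine LinearMap.ext fun p => ?_
  obtain ⟨q, rfl⟩ := mulVec_surjective_iff_isUnit.2 hBt p
  exact Fintype.linearIndependent_iff.1 hA _ (comb q) a

end Algebra

section LeastSquares

set_option maxSynthPendingDepth 3

variable {τ κ E F : Type*} [Fintype κ] [NormedAddCommGroup E] [NormedSpace ℝ E]
  [NormedAddCommGroup F] [NormedSpace ℝ F] {x : E}

theorem toMatrix_mulVec_eq_repr_sum (b : Module.Basis τ ℝ F) (v : κ → F)
    (c : κ → ℝ) : b.toMatrix v *ᵥ c = b.repr (∑ a, c a • v a) := by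
  ext i
  simp only [mulVec, dotProduct, Module.Basis.toMatrix_apply, map_sum, map_smul,
    Finsupp.coe_finsetSum, Finset.sum_apply, Finsupp.smul_apply, smul_eq_mul, mul_comm]

variable [Fintype τ] [DecidableEq κ]

/-- The coefficients of the combination of the vectors `v a` nearest to `w`, for the Euclidean
distance in the coordinates of the basis `b`, given by the normal equations. They depend smoothly on
`v` and `w` wherever the `v a` are independent, even as `w` leaves their span. -/
noncomputable def leastSquaresCoeff (b : Module.Basis τ ℝ F) (v : κ → F) (w : F) : κ → ℝ :=
  ((b.toMatrix v)ᵀ * b.toMatrix v)⁻¹ *ᵥ (b.toMatrix v)ᵀ *ᵥ b.repr w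

theorem isUnit_transpose_toMatrix_mul_self (b : Module.Basis τ ℝ F) {v : κ → F}
    (hv : LinearIndependent ℝ v) : IsUnit ((b.toMatrix v)ᵀ * b.toMatrix v) := by
  refine mulVec_injective_iff_isUnit.1 ((injective_iff_map_eq_zero
    ((b.toMatrix v)ᵀ * b.toMatrix v).mulVecLin).2 fun c hc => ?_)
  have := (conjTranspose_mul_self_mulVec_eq_zero (b.toMatrix v) c).1 hc
  rw [toMatrix_mulVec_eq_repr_sum] at this
  funext a
  exact Fintype.linearIndependent_iff.1 hv c
    (b.repr.map_eq_zero_iff.1 (DFunLike.coe_injective this)) a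

theorem sum_leastSquaresCoeff_smul (b : Module.Basis τ ℝ F) {v : κ → F} {w : F}
    (hv : LinearIndependent ℝ v) (hw : w ∈ Submodule.span ℝ (Set.range v)) :
    ∑ a, leastSquaresCoeff b v w a • v a = w := by
  obtain ⟨c, rfl⟩ := (Submodule.mem_span_range_iff_exists_fun ℝ).1 hw
  rw [leastSquaresCoeff, ← toMatrix_mulVec_eq_repr_sum, mulVec_mulVec, mulVec_mulVec,
    Matrix.mul_assoc, nonsing_inv_mul _ ((isUnit_iff_isUnit_det _).1
      (isUnit_transpose_toMatrix_mul_self b hv)), one_mulVec]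

open scoped Matrix.Norms.Operator in
theorem contDiffAt_leastSquaresCoeff [FiniteDimensional ℝ F] (b : Module.Basis τ ℝ F)
    {k : WithTop ℕ∞} {v : κ → E → F} {w : E → F} (hv : ∀ a, ContDiffAt ℝ k (v a) x)
    (hw : ContDiffAt ℝ k w x) (hli : LinearIndependent ℝ fun a => v a x) (a : κ) :
    ContDiffAt ℝ k (fun y => leastSquaresCoeff b (fun a => v a y) (w y) a) x := by
  have coord (i : τ) {u : E → F} (hu : ContDiffAt ℝ k u x) :
      ContDiffAt ℝ k (fun y => b.repr (u y) i) x :=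
    (b.coord i).toContinuousLinearMap.contDiff.contDiffAt.comp x hu
  have gram : ContDiffAt ℝ k
      (fun y => (b.toMatrix fun a => v a y)ᵀ * b.toMatrix fun a => v a y) x :=
    contDiffAt_matrix_iff.2 fun a c => ContDiffAt.sum fun i _ =>
      (coord i (hv a)).mul (coord i (hv c))
  have inverse := contDiffAt_matrix_iff.1
    (contDiffAt_matrix_inv gram (isUnit_transpose_toMatrix_mul_self b hli))
  exact ContDiffAt.sum fun c _ => (inverse a c).mul
    (ContDiffAt.sum fun i _ => (coord i (hv c)).mul (coord i hw))

end LeastSquares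

section MainStep

set_option maxSynthPendingDepth 3
open scoped Matrix.Norms.Operator

theorem exists_notMem_mem_span_of_not_linearIndependent {κ V : Type*} [AddCommGroup V] [Module ℝ V]
    {v : κ → V} (h : ¬LinearIndependent ℝ v) : ∃ (b : Set κ) (β : κ), β ∉ b ∧
      LinearIndependent ℝ (fun a : b => v a) ∧
      v β ∈ Submodule.span ℝ (Set.range fun a : b => v a) := by
  obtain ⟨b, -, -, hspan, hli⟩ := exists_linearIndepOn_extension
    (linearIndepOn_empty ℝ v) (Set.empty_subset Set.univ)
  have hb : b ≠ Set.univ := by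
    rintro rfl
    exact h (linearIndepOn_univ_iff.1 hli)
  obtain ⟨β, hβ⟩ := (Set.ne_univ_iff_exists_notMem b).1 hb
  exact ⟨b, β, hβ, hli, Set.image_eq_range v b ▸ hspan ⟨β, Set.mem_univ β, rfl⟩⟩

theorem VanishesToOrder.sub_sum_const_smul {κ E F : Type*} [Fintype κ] [NormedAddCommGroup E]
    [NormedSpace ℝ E] [NormedAddCommGroup F] [NormedSpace ℝ F] {x : E} {m : ℕ} {c : κ → E → ℝ}
    {K : κ → E → F} {M : E → F}
    (h : VanishesToOrder (m + 1) (fun y => M y - ∑ a, c a y • K a y) x)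
    (hdc : ∀ a, VanishesToOrder m (fderiv ℝ (c a)) x) (hc : ∀ a, ContDiffAt ℝ (m + 1 : ℕ) (c a) x)
    (hK : ∀ a, ContDiffAt ℝ (m + 1 : ℕ) (K a) x) (hM : ContDiffAt ℝ (m + 1 : ℕ) M x) :
    VanishesToOrder (m + 1) (M - ∑ a, c a x • K a) x := by
  have hcx (a : κ) : ContDiffAt ℝ (m + 1 : ℕ) (fun y => c a y - c a x) x :=
    (hc a).sub contDiffAt_const
  have increment (a : κ) : VanishesToOrder (m + 1) (fun y => c a y - c a x) x := by
    have fderiv_increment : fderiv ℝ (fun y => c a y - c a x) = fderiv ℝ (c a) :=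
      funext fun _ => fderiv_sub_const _
    exact vanishesToOrder_succ_iff.2 ⟨sub_self _, fderiv_increment ▸ hdc a⟩
  have correction := VanishesToOrder.sum (s := Finset.univ)
    (fun a _ => (increment a).bilinear_left (ContinuousLinearMap.lsmul ℝ ℝ) (hcx a) (hK a))
    (fun a _ => (hcx a).smul (hK a))
  convert h.add correction (hM.sub (ContDiffAt.sum fun a _ => (hc a).smul (hK a)))
    (ContDiffAt.sum fun a _ => (hcx a).smul (hK a)) using 2 with y
  simp only [ContinuousLinearMap.lsmul_apply, sub_smul, Finset.sum_sub_distrib, Pi.sub_apply,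
    Finset.sum_apply, Pi.smul_apply]
  abel

variable {ι κ : Type*} [Fintype ι] [DecidableEq ι] {G M : (ι → ℝ) → Matrix ι ι ℝ}
  {K : κ → (ι → ℝ) → Matrix ι ι ℝ} {U : Set (ι → ℝ)} {x : ι → ℝ}

theorem fderiv_coeff_eq_zero [Fintype κ] {c : κ → (ι → ℝ) → ℝ}
    (hc : ∀ a, DifferentiableAt ℝ (c a) x) (hK : ∀ a, DifferentiableAt ℝ (K a) x)
    (hM : DifferentiableAt ℝ M x) (hG : IsUnit (G x))
    (hKk : ∀ a p, killingDefect G (K a) x p = 0) (hMk : ∀ p, killingDefect G M x p = 0)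
    (hli : LinearIndependent ℝ fun a => K a x)
    (hdiag : ∃ B : Matrix ι ι ℝ, IsUnit B ∧ ∀ a, (B * K a x * Bᵀ).IsDiag)
    (h₀ : VanishesToOrder 1 (fun y => M y - ∑ a, c a y • K a y) x) (a : κ) :
    fderiv ℝ (c a) x = 0 := by
  obtain ⟨B, hB, hdiag⟩ := hdiag
  have hsum : DifferentiableAt ℝ (fun y => ∑ a, c a y • K a y) x :=
    DifferentiableAt.fun_sum fun a _ => (hc a).fun_smul (hK a)
  have leibniz (p : ι → ℝ) : ∑ a, fderiv ℝ (c a) x (G x *ᵥ p) * bilinL (K a x) p p = 0 := by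
    have split : M = fun y => (M y - ∑ a, c a y • K a y) + ∑ a, c a y • K a y := by
      simp only [sub_add_cancel]
    have killing := hMk p
    rw [split, killingDefect_add (hM.fun_sub hsum) hsum,
      killingDefect_eq_zero_of_vanishesToOrder h₀, killingDefect_sum_smul hc hK] at killing
    simpa only [hKk, mul_zero, Finset.sum_const_zero, zero_add] using killing
  have forms_eq_zero := eq_zero_of_sum_mul_quadratic_eq_zero hli hB hdiag
    (l := fun a => (fderiv ℝ (c a) x).toLinearMap ∘ₗ (G x).mulVecLin) leibniz a
  refine ContinuousLinearMap.ext fun v => ?_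
  obtain ⟨p, rfl⟩ := mulVec_surjective_iff_isUnit.2 hG v
  exact DFunLike.congr_fun forms_eq_zero p

theorem ae_vanishesToOrder_sub_sum_const_smul [Fintype κ] {S : Set (ι → ℝ)}
    {c : κ → (ι → ℝ) → ℝ} (hUo : IsOpen U) (hGinv : ∀ x ∈ U, IsUnit (G x))
    (hK : ∀ a, K a ∈ killingTensors G hUo) (hM : M ∈ killingTensors G hUo) (hSU : S ⊆ U)
    (hc : ∀ a, ∀ x ∈ S, ContDiffAt ℝ 3 (c a) x)
    (hli : ∀ x ∈ S, LinearIndependent ℝ fun a => K a x) (hsum : ∀ x ∈ S, ∑ a, c a x • K a x = M x)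
    (hdiag : ∀ᵐ x, x ∈ S → ∃ B : Matrix ι ι ℝ, IsUnit B ∧ ∀ a, (B * K a x * Bᵀ).IsDiag) :
    ∀ᵐ x, x ∈ S → VanishesToOrder 2 (M - ∑ a, c a x • K a) x := by
  have contDiffAt {L : (ι → ℝ) → Matrix ι ι ℝ} (hL : L ∈ killingTensors G hUo) {x} (hx : x ∈ S) :
      ContDiffAt ℝ 3 L x := hL.1.contDiffAt (hUo.mem_nhds (hSU hx))
  have remainder : ∀ᵐ x, x ∈ S → VanishesToOrder 2 (fun y => M y - ∑ a, c a y • K a y) x :=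
    ae_vanishesToOrder_of_ae_eq_zero
      (fun x hx => ((contDiffAt hM hx).sub (ContDiffAt.sum fun a _ => (hc a x hx).smul
        (contDiffAt (hK a) hx))).of_le (by norm_num))
      (.of_forall fun x hx => sub_eq_zero.2 (hsum x hx).symm)
  have coeff (a : κ) : ∀ᵐ x, x ∈ S → VanishesToOrder 1 (fderiv ℝ (c a)) x := by
    refine ae_vanishesToOrder_of_ae_eq_zero
      (fun x hx => (hc a x hx).fderiv_right (by norm_num)) ?_
    filter_upwards [remainder, hdiag] with x hx hdiag hxS
    exact fderiv_coeff_eq_zero (fun a => (hc a x hxS).differentiableAt (by norm_num))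
      (fun a => (contDiffAt (hK a) hxS).differentiableAt (by norm_num))
      ((contDiffAt hM hxS).differentiableAt (by norm_num)) (hGinv x (hSU hxS))
      (fun a => (hK a).2.2 x (hSU hxS)) (hM.2.2 x (hSU hxS)) (hli x hxS) (hdiag hxS)
      (fun j hj => hx hxS j (by lia)) a
  filter_upwards [remainder, ae_all_iff.2 coeff] with x hx hdc hxS
  exact (hx hxS).sub_sum_const_smul (hdc · hxS) (fun a => (hc a x hxS).of_le (by norm_num))
    (fun a => (contDiffAt (hK a) hxS).of_le (by norm_num))
    ((contDiffAt hM hxS).of_le (by norm_num))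

theorem ae_notMem_span_of_domRestrict_notMem_span [Finite κ] (hUo : IsOpen U)
    (hUc : IsPreconnected U) (hG : ContDiffOn ℝ 3 G U) (hGs : ∀ x ∈ U, (G x).IsSymm)
    (hGinv : ∀ x ∈ U, IsUnit (G x)) (hK : ∀ a, K a ∈ killingTensors G hUo)
    (hM : M ∈ killingTensors G hUo)
    (hdiag : ∀ᵐ x, x ∈ U → ∃ B : Matrix ι ι ℝ, IsUnit B ∧ ∀ a, (B * K a x * Bᵀ).IsDiag)
    (hspan : U.domRestrict M ∉ Submodule.span ℝ (Set.range fun a => U.domRestrict (K a))) :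
    ∀ᵐ x, x ∈ U → LinearIndependent ℝ (fun a => K a x) →
      M x ∉ Submodule.span ℝ (Set.range fun a => K a x) := by
  classical
  have := Fintype.ofFinite κ
  let S : Set (ι → ℝ) := {x | x ∈ U ∧ LinearIndependent ℝ (fun a => K a x) ∧
    M x ∈ Submodule.span ℝ (Set.range fun a => K a x)}
  let c (a : κ) (y : ι → ℝ) : ℝ :=
    leastSquaresCoeff (Module.finBasis ℝ (Matrix ι ι ℝ)) (fun a => K a y) (M y) a
  have contDiffAt_c (a : κ) : ∀ x ∈ S, ContDiffAt ℝ 3 (c a) x := fun x hx =>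
    contDiffAt_leastSquaresCoeff _ (fun a => (hK a).1.contDiffAt (hUo.mem_nhds hx.1))
      (hM.1.contDiffAt (hUo.mem_nhds hx.1)) hx.2.1 a
  filter_upwards [ae_vanishesToOrder_sub_sum_const_smul hUo hGinv hK hM (fun x hx => hx.1)
    contDiffAt_c (fun x hx => hx.2.1) (fun x hx => sum_leastSquaresCoeff_smul _ hx.2.1 hx.2.2)
    (hdiag.mono fun x h hx => h hx.1)] with x hx hxU hli hmem
  have eq_zero := eqOn_zero_of_mem_killingTensors hUo hUc hG hGs hGinv
    (sub_mem hM (sum_mem fun a _ => Submodule.smul_mem _ (c a x) (hK a))) hxU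
    (hx ⟨hxU, hli, hmem⟩)
  refine hspan ((Submodule.mem_span_range_iff_exists_fun ℝ).2 ⟨fun a => c a x, funext fun y => ?_⟩)
  have := (sub_eq_zero.1 (eq_zero y.2)).symm
  rw [Finset.sum_apply] at this ⊢
  exact this

theorem ae_linearIndependent_of_mem_killingTensors [Finite κ] (hUo : IsOpen U)
    (hUc : IsPreconnected U) (hG : ContDiffOn ℝ 3 G U) (hGs : ∀ x ∈ U, (G x).IsSymm)
    (hGinv : ∀ x ∈ U, IsUnit (G x)) (hK : ∀ a, K a ∈ killingTensors G hUo)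
    (hdiag : ∀ᵐ x, x ∈ U → ∃ B : Matrix ι ι ℝ, IsUnit B ∧ ∀ a, (B * K a x * Bᵀ).IsDiag)
    (hli : LinearIndependent ℝ fun a => U.domRestrict (K a)) :
    ∀ᵐ x, x ∈ U → LinearIndependent ℝ fun a => K a x := by
  classical
  have notMem_span (b : Set κ) (β : κ) (hβ : β ∉ b) : ∀ᵐ x, x ∈ U →
      LinearIndependent ℝ (fun a : b => K a x) →
        K β x ∉ Submodule.span ℝ (Set.range fun a : b => K a x) := by
    refine ae_notMem_span_of_domRestrict_notMem_span hUo hUc hG hGs hGinv (fun a : b => hK a) (hK β)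
      (hdiag.mono fun x h hx => (h hx).imp fun B hB => ⟨hB.1, fun a => hB.2 a⟩) ?_
    rw [← Set.image_eq_range (fun a => U.domRestrict (K a))]
    exact hli.notMem_span_image hβ
  filter_upwards [ae_all_iff.2 fun b => ae_all_iff.2 fun β => ae_all_iff.2 (notMem_span b β)]
    with x hx hxU
  by_contra hdep
  obtain ⟨b, β, hβ, hlib, hmem⟩ := exists_notMem_mem_span_of_not_linearIndependent hdep
  exact hx b β hβ hxU hlib hmem

end MainStep

theorem stmt0_general {n : ℕ} {κ : Type*} [Finite κ] {U : Set (Fin n → ℝ)} (hUopen : IsOpen U)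
    (hUconn : IsPreconnected U) {G : (Fin n → ℝ) → Matrix (Fin n) (Fin n) ℝ}
    {K : κ → (Fin n → ℝ) → Matrix (Fin n) (Fin n) ℝ}
    (hG : ∀ i j, ContDiffOn ℝ 3 (fun x => G x i j) U)
    (hK : ∀ α i j, ContDiffOn ℝ 3 (fun x => K α x i j) U)
    (hGsymm : ∀ x ∈ U, (G x).IsSymm) (hKsymm : ∀ α, ∀ x ∈ U, (K α x).IsSymm)
    (hGinv : ∀ x ∈ U, IsUnit (G x))
    (h1 : ∀ α, ∀ z : (Fin n → ℝ) × (Fin n → ℝ), z.1 ∈ U →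
      poisson (fun z => (1 / 2 : ℝ) * quadraticObservable G z) (quadraticObservable (K α)) z = 0)
    (h2 : ∀ᵐ x ∂(volume : Measure (Fin n → ℝ)), x ∈ U →
      ∃ B : Matrix (Fin n) (Fin n) ℝ, IsUnit B ∧ ∀ α, (B * K α x * Bᵀ).IsDiag)
    (h3 : LinearIndependent ℝ fun α => U.domRestrict (K α)) :
    ∀ᵐ x ∂(volume : Measure (Fin n → ℝ)), x ∈ U → LinearIndependent ℝ (fun α => K α x) :=
  ae_linearIndependent_of_mem_killingTensors hUopen hUconn (contDiffOn_matrix_iff.2 hG) hGsymm hGinv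
    (fun α => mem_killingTensors_of_poisson_eq_zero hUopen (contDiffOn_matrix_iff.2 hG)
      (contDiffOn_matrix_iff.2 (hK α)) hGsymm (hKsymm α) (h1 α)) h2 h3

/-- if the geodesic flow of `G = K 0` admits the quadratic integrals
`I α (x,p) = pᵀ K α (x) p`, `α = 1, …, n`, which are simultaneously diagonalisable
at almost every point and whose differentials are linearly independent at some point,
then at almost every point `x ∈ U` the matrices `K 1 (x), …, K n (x)` are linearly
independent. -/
theorem stmt0 (n : ℕ) (hn : 1 ≤ n)
    (U : Set (Fin n → ℝ)) (hUopen : IsOpen U) (hUconn : IsConnected U)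
    (K : Fin n → (Fin n → ℝ) → Matrix (Fin n) (Fin n) ℝ)
    (hKsmooth : ∀ α i j, ContDiffOn ℝ (⊤ : ℕ∞) (fun x => K α x i j) U)
    (hKsymm : ∀ α, ∀ x ∈ U, (K α x).IsSymm)
    (hGinv : ∀ x ∈ U, IsUnit (K ⟨0, hn⟩ x))
    (I : Fin n → (Fin n → ℝ) × (Fin n → ℝ) → ℝ)
    (hI : ∀ α, I α = fun z => ∑ i : Fin n, ∑ j : Fin n, K α z.1 i j * z.2 i * z.2 j)
    (H : (Fin n → ℝ) × (Fin n → ℝ) → ℝ)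
    (hH : H = fun z => (1 / 2 : ℝ) * I ⟨0, hn⟩ z)
    -- (1) each `I α` is an integral of the geodesic flow
    (h1 : ∀ α, ∀ z : (Fin n → ℝ) × (Fin n → ℝ), z.1 ∈ U → poisson H (I α) z = 0)
    -- (2) simultaneous diagonalisability at almost every point
    (h2 : ∀ᵐ x ∂(volume : Measure (Fin n → ℝ)), x ∈ U →
      ∃ B : Matrix (Fin n) (Fin n) ℝ, IsUnit B ∧ ∀ α, (B * K α x * Bᵀ).IsDiag)
    -- (3) the differentials of the integrals are linearly independent at some point
    (h3 : ∃ z : (Fin n → ℝ) × (Fin n → ℝ), z.1 ∈ U ∧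
      LinearIndependent ℝ (fun α => fderiv ℝ (I α) z)) :
    ∀ᵐ x ∂(volume : Measure (Fin n → ℝ)), x ∈ U →
      LinearIndependent ℝ (fun α => K α x) := by
  obtain rfl : I = fun α => quadraticObservable (K α) := funext hI
  obtain ⟨z, hz, hli⟩ := h3
  have hK (α i j) : ContDiffOn ℝ 3 (fun x => K α x i j) U :=
    (hKsmooth α i j).of_le (WithTop.coe_le_coe.2 le_top)
  exact stmt0_general hUopen hUconn.isPreconnected (hK _) hK (hKsymm _) hKsymm hGinv (hH ▸ h1) h2
    (linearIndependent_domRestrict_of_fderiv_quadraticObservable hUopen hz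
      (fun α i j => (hK α i j).of_le (by norm_num)) hli)
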